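/- No deductron with 6 inputs, 2 memory cells and 2 outputs correctly decodes the W-language; that is, for every choice of W1 ∈ ℝ^{4×6}, b1 ∈ ℝ^{4}, W2 ∈ ℝ^{2×2}, b2 ∈ ℝ^{2}, there exists a valid W-image c_0,…,c_{N−1} and an index t with 1 ≤ t ≤ N−1 such that the deductron's output o_t on the sliding-window input sequence differs from (1,0) if the image emits 'X' at t, from (0,1) if it emits 'O' at t, and from (0,0) otherwise. -/

import Mathlib

/-!
Each memory cell is updated separately: the input decides whether the cell is set, reset or kept.
Hence, if two runs read the same input, a cell on which they agree before the step is a cell on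
which they agree after it (`dedZ_congr`).

Consider the images `e1 e3 e2 e1 e2 e3` (an X-image continued by `e2 e3`) and `e3 e1 e2 e3`
(an O-image). Both end with the columns `e1 e2 e3`. On these columns the first run must output
X, nothing, nothing, and the second one nothing, nothing, O. A deductron with two cells has only
four memory contents; let `P` be the one at which the first run outputs X and `Q` the one at which the
second run outputs O; the other contents occurring here give no output. At the column `e2` the two
runs have different contents, since their outputs differ one step later on the same input, so
these two contents are exactly the complement of `{P, Q}`.

* If the two contents at `e2` are adjacent, the two runs at the last column differ in the same
  single bit; but one of them is `Q` and the other lies in the complement of `{P, Q}`, so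
  they do not differ in exactly the bit that separates the two elements of that complement.
* If they are opposite, the runs differed in both bits already at the column `e1`; but there one of
  them is `P` and the other lies in the complement of `{P, Q}`, so they are adjacent.

The cube argument is `no_two_bit_trace`; it uses no property of the output layer beyond the fact
that the output is a function of the memory.
-/

/-- The hard threshold activation: `S a = 1` if `a ≤ 0`, `S a = 0` if `a > 0`. -/
noncomputable def hardS (a : ℝ) : ℝ := if a ≤ 0 then 1 else 0

/-- States of the W-chain: `z` is the blank state `0`, and `e2p`, `e2m` are `e2⁺`, `e2⁻`. -/
inductive WState | z | e1 | e2p | e2m | e3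
deriving DecidableEq

/-- The edge relation of the W-chain. -/
def wEdge : WState → WState → Prop := fun a b =>
  a = b ∨
  (a = .z ∧ b = .e1) ∨ (a = .z ∧ b = .e3) ∨
  (a = .e1 ∧ b = .z) ∨ (a = .e1 ∧ b = .e3) ∨ (a = .e1 ∧ b = .e2p) ∨
  (a = .e2p ∧ b = .e3) ∨
  (a = .e3 ∧ b = .z) ∨ (a = .e3 ∧ b = .e1) ∨ (a = .e3 ∧ b = .e2m) ∨
  (a = .e2m ∧ b = .e1)

/-- The column labelling each state of the W-chain. -/
def wLabel : WState → (Fin 3 → ℝ)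
  | .z => ![0, 0, 0]
  | .e1 => ![1, 0, 0]
  | .e2p => ![0, 1, 0]
  | .e2m => ![0, 1, 0]
  | .e3 => ![0, 0, 1]

def col0 : Fin 3 → ℝ := ![0, 0, 0]
def colE1 : Fin 3 → ℝ := ![1, 0, 0]
def colE3 : Fin 3 → ℝ := ![0, 0, 1]

/-- `c 0, …, c (N-1)` is a valid W-image: the label sequence of a path in the W-chain
starting and ending in `{0, e1, e3}`. -/
def ValidWImage (N : ℕ) (c : ℕ → Fin 3 → ℝ) : Prop :=
  1 ≤ N ∧ ∃ s : ℕ → WState,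
    (∀ t, t + 1 < N → wEdge (s t) (s (t + 1))) ∧
    (∀ t, t < N → c t = wLabel (s t)) ∧
    (s 0 = .z ∨ s 0 = .e1 ∨ s 0 = .e3) ∧
    (s (N - 1) = .z ∨ s (N - 1) = .e1 ∨ s (N - 1) = .e3)

/-- An X-start occurs at position `t ≥ 1`. -/
def XStart (c : ℕ → Fin 3 → ℝ) (t : ℕ) : Prop :=
  1 ≤ t ∧ c t = colE3 ∧ (c (t - 1) = col0 ∨ c (t - 1) = colE1)

/-- An O-start occurs at position `t ≥ 1`. -/
def OStart (c : ℕ → Fin 3 → ℝ) (t : ℕ) : Prop :=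
  1 ≤ t ∧ c t = colE1 ∧ (c (t - 1) = col0 ∨ c (t - 1) = colE3)

/-- The image emits 'X' at position `t`: `c t = e1` and the most recent start event at a
position `s ≤ t` is an X-start. -/
def EmitsX (c : ℕ → Fin 3 → ℝ) (t : ℕ) : Prop :=
  1 ≤ t ∧ c t = colE1 ∧ ∃ s, s ≤ t ∧ XStart c s ∧
    ∀ r, s < r → r ≤ t → ¬ XStart c r ∧ ¬ OStart c r

/-- The image emits 'O' at position `t`: `c t = e3` and the most recent start event at a
position `s ≤ t` is an O-start. -/
def EmitsO (c : ℕ → Fin 3 → ℝ) (t : ℕ) : Prop :=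
  1 ≤ t ∧ c t = colE3 ∧ ∃ s, s ≤ t ∧ OStart c s ∧
    ∀ r, s < r → r ≤ t → ¬ XStart c r ∧ ¬ OStart c r

/-- `u`-part of the hidden layer: first `m` coordinates of `S (W1 xₜ + b1)`. -/
noncomputable def dedU (m nin : ℕ) (W1 : Matrix (Fin (2 * m)) (Fin nin) ℝ)
    (b1 : Fin (2 * m) → ℝ) (x : ℕ → Fin nin → ℝ) (t : ℕ) (i : Fin m) : ℝ :=
  hardS ((∑ j, W1 ⟨i.val, by have := i.isLt; omega⟩ j * x t j) +
    b1 ⟨i.val, by have := i.isLt; omega⟩)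

/-- `v`-part of the hidden layer: last `m` coordinates of `S (W1 xₜ + b1)`. -/
noncomputable def dedV (m nin : ℕ) (W1 : Matrix (Fin (2 * m)) (Fin nin) ℝ)
    (b1 : Fin (2 * m) → ℝ) (x : ℕ → Fin nin → ℝ) (t : ℕ) (i : Fin m) : ℝ :=
  hardS ((∑ j, W1 ⟨m + i.val, by have := i.isLt; omega⟩ j * x t j) +
    b1 ⟨m + i.val, by have := i.isLt; omega⟩)

/-- The memory of the deductron: `z 0 = 0`, `z t = (1 − uₜ)(1 − vₜ) z (t−1) + uₜ`. -/
noncomputable def dedZ (m nin : ℕ) (W1 : Matrix (Fin (2 * m)) (Fin nin) ℝ)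
    (b1 : Fin (2 * m) → ℝ) (x : ℕ → Fin nin → ℝ) : ℕ → Fin m → ℝ
  | 0 => fun _ => 0
  | t + 1 => fun i =>
      (1 - dedU m nin W1 b1 x (t + 1) i) * (1 - dedV m nin W1 b1 x (t + 1) i) *
        dedZ m nin W1 b1 x t i + dedU m nin W1 b1 x (t + 1) i

/-- The output of the deductron: `oₜ = S (W2 zₜ + b2)`. -/
noncomputable def dedO (m nin nout : ℕ) (W1 : Matrix (Fin (2 * m)) (Fin nin) ℝ)
    (b1 : Fin (2 * m) → ℝ) (W2 : Matrix (Fin nout) (Fin m) ℝ) (b2 : Fin nout → ℝ)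
    (x : ℕ → Fin nin → ℝ) (t : ℕ) (i : Fin nout) : ℝ :=
  hardS ((∑ j, W2 i j * dedZ m nin W1 b1 x t j) + b2 i)

/-- The sliding-window input sequence of an image: `xₜ = (c (t−1), c t) ∈ {0,1}⁶`. -/
def slide (c : ℕ → Fin 3 → ℝ) (t : ℕ) (j : Fin 6) : ℝ :=
  if h : (j : ℕ) < 3 then c (t - 1) ⟨j, h⟩
  else c t ⟨(j : ℕ) - 3, by have := j.isLt; omega⟩

/-- A deductron with `m` memory cells, 6 inputs and 2 outputs correctly decodes
the W-language. -/
def DecodesW (m : ℕ) (W1 : Matrix (Fin (2 * m)) (Fin 6) ℝ) (b1 : Fin (2 * m) → ℝ)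
    (W2 : Matrix (Fin 2) (Fin m) ℝ) (b2 : Fin 2 → ℝ) : Prop :=
  ∀ N : ℕ, ∀ c : ℕ → Fin 3 → ℝ, ValidWImage N c →
    ∀ t, 1 ≤ t → t ≤ N - 1 →
      (EmitsX c t → (fun i => dedO m 6 2 W1 b1 W2 b2 (slide c) t i) = ![1, 0]) ∧
      (EmitsO c t → (fun i => dedO m 6 2 W1 b1 W2 b2 (slide c) t i) = ![0, 1]) ∧
      (¬ EmitsX c t → ¬ EmitsO c t →
        (fun i => dedO m 6 2 W1 b1 W2 b2 (slide c) t i) = ![0, 0])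

/-- The states of the image `e1 e3 e2 e1 e2 e3`, constant after position 5. -/
def pathX : ℕ → WState
  | 0 => .e1
  | 1 => .e3
  | 2 => .e2m
  | 3 => .e1
  | 4 => .e2p
  | _ => .e3

/-- The states of the image `e3 e1 e2 e3`, constant after position 3. -/
def pathO : ℕ → WState
  | 0 => .e3
  | 1 => .e1
  | 2 => .e2p
  | _ => .e3

/-- The image traced by a sequence of states. -/
def imageOf (s : ℕ → WState) (t : ℕ) : Fin 3 → ℝ := wLabel (s t)

lemma wLabel_eq_col0 (a : WState) : wLabel a = col0 ↔ a = .z := by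
  cases a <;> simp [wLabel, col0]

lemma wLabel_eq_colE1 (a : WState) : wLabel a = colE1 ↔ a = .e1 := by
  cases a <;> simp [wLabel, colE1]

lemma wLabel_eq_colE3 (a : WState) : wLabel a = colE3 ↔ a = .e3 := by
  cases a <;> simp [wLabel, colE3]

lemma xStart_imageOf (s : ℕ → WState) (t : ℕ) :
    XStart (imageOf s) t ↔ 1 ≤ t ∧ s t = .e3 ∧ (s (t - 1) = .z ∨ s (t - 1) = .e1) := by
  simp [XStart, imageOf, wLabel_eq_col0, wLabel_eq_colE1, wLabel_eq_colE3]

lemma oStart_imageOf (s : ℕ → WState) (t : ℕ) :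
    OStart (imageOf s) t ↔ 1 ≤ t ∧ s t = .e1 ∧ (s (t - 1) = .z ∨ s (t - 1) = .e3) := by
  simp [OStart, imageOf, wLabel_eq_col0, wLabel_eq_colE1, wLabel_eq_colE3]

lemma valid_pathX : ValidWImage 6 (imageOf pathX) := by
  refine ⟨by norm_num, pathX, fun t ht => ?_, fun t _ => rfl, by simp [pathX], by simp [pathX]⟩
  have : t < 5 := by omega
  interval_cases t <;> simp [wEdge, pathX]

lemma valid_pathO : ValidWImage 4 (imageOf pathO) := by
  refine ⟨by norm_num, pathO, fun t ht => ?_, fun t _ => rfl, by simp [pathO], by simp [pathO]⟩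
  have : t < 3 := by omega
  interval_cases t <;> simp [wEdge, pathO]

lemma not_oStart_pathX (t : ℕ) (ht : t ≤ 5) : ¬ OStart (imageOf pathX) t := by
  rw [oStart_imageOf]
  interval_cases t <;> simp [pathX]

lemma not_xStart_pathO (t : ℕ) (ht : t ≤ 3) : ¬ XStart (imageOf pathO) t := by
  rw [xStart_imageOf]
  interval_cases t <;> simp [pathO]

lemma emitsX_pathX : EmitsX (imageOf pathX) 3 := by
  refine ⟨by norm_num, rfl, 1, by norm_num, ?_, fun r hr hr' =>
    ⟨?_, not_oStart_pathX r (by omega)⟩⟩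
  · simp [xStart_imageOf, pathX]
  · rw [xStart_imageOf]
    interval_cases r <;> simp [pathX]

lemma not_emitsX_pathX (t : ℕ) (h4 : 4 ≤ t) (h5 : t ≤ 5) : ¬ EmitsX (imageOf pathX) t := by
  rintro ⟨-, h, -⟩
  rw [imageOf, wLabel_eq_colE1] at h
  interval_cases t <;> simp [pathX] at h

lemma not_emitsO_pathX (t : ℕ) (h5 : t ≤ 5) : ¬ EmitsO (imageOf pathX) t := by
  rintro ⟨-, -, s, hs, h, -⟩
  exact not_oStart_pathX s (by omega) h

lemma emitsO_pathO : EmitsO (imageOf pathO) 3 := by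
  refine ⟨by norm_num, rfl, 1, by norm_num, ?_, fun r hr hr' =>
    ⟨not_xStart_pathO r (by omega), ?_⟩⟩
  · simp [oStart_imageOf, pathO]
  · rw [oStart_imageOf]
    interval_cases r <;> simp [pathO]

lemma not_emitsO_pathO (t : ℕ) (h1 : 1 ≤ t) (h2 : t ≤ 2) : ¬ EmitsO (imageOf pathO) t := by
  rintro ⟨-, h, -⟩
  rw [imageOf, wLabel_eq_colE3] at h
  interval_cases t <;> simp [pathO] at h

lemma not_emitsX_pathO (t : ℕ) (h3 : t ≤ 3) : ¬ EmitsX (imageOf pathO) t := by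
  rintro ⟨-, -, s, hs, h, -⟩
  exact not_xStart_pathO s (by omega) h

lemma hardS_eq_zero_or_one (a : ℝ) : hardS a = 0 ∨ hardS a = 1 := by
  unfold hardS
  split_ifs <;> simp

lemma dedZ_eq_zero_or_one (m nin : ℕ) (W1 : Matrix (Fin (2 * m)) (Fin nin) ℝ)
    (b1 : Fin (2 * m) → ℝ) (x : ℕ → Fin nin → ℝ) (t : ℕ) (i : Fin m) :
    dedZ m nin W1 b1 x t i = 0 ∨ dedZ m nin W1 b1 x t i = 1 := by
  induction t with
  | zero => simp [dedZ]
  | succ t ih =>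
    have hu : dedU m nin W1 b1 x (t + 1) i = 0 ∨ dedU m nin W1 b1 x (t + 1) i = 1 :=
      hardS_eq_zero_or_one _
    have hv : dedV m nin W1 b1 x (t + 1) i = 0 ∨ dedV m nin W1 b1 x (t + 1) i = 1 :=
      hardS_eq_zero_or_one _
    rcases hu with hu | hu <;> rcases hv with hv | hv <;> simp [dedZ, hu, hv, ih]

/-- The update of a cell depends only on the current input and on the content of that cell. -/
lemma dedZ_congr (m nin : ℕ) (W1 : Matrix (Fin (2 * m)) (Fin nin) ℝ)
    (b1 : Fin (2 * m) → ℝ) (x y : ℕ → Fin nin → ℝ) (t r : ℕ) (i : Fin m)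
    (hxy : x (t + 1) = y (r + 1))
    (h : dedZ m nin W1 b1 x t i = dedZ m nin W1 b1 y r i) :
    dedZ m nin W1 b1 x (t + 1) i = dedZ m nin W1 b1 y (r + 1) i := by
  simp only [dedZ, dedU, dedV, hxy, h]

/-- In the square `{0,1}²`, let traces `p, q, r` and `a, b, c` evolve so that agreement of a bit
persists. Then it is impossible that `p` and `c` differ from each other and both differ from
`q`, `r` and `b`, and that `a` differs from `c`. (That `a ≠ p` is then automatic: otherwise the
traces would agree from the start.) -/
lemma no_two_bit_trace (p q r a b c : Fin 2 → ℝ)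
    (bp : ∀ i, p i = 0 ∨ p i = 1) (bq : ∀ i, q i = 0 ∨ q i = 1) (br : ∀ i, r i = 0 ∨ r i = 1)
    (ba : ∀ i, a i = 0 ∨ a i = 1) (bb : ∀ i, b i = 0 ∨ b i = 1) (bc : ∀ i, c i = 0 ∨ c i = 1)
    (hpq : ∀ i, p i = a i → q i = b i) (hqr : ∀ i, q i = b i → r i = c i)
    (pq : p ≠ q) (pr : p ≠ r) (pb : p ≠ b) (pc : p ≠ c)
    (cq : c ≠ q) (cr : c ≠ r) (ca : c ≠ a) (cb : c ≠ b) : False := by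
  simp only [ne_eq, funext_iff, Fin.forall_fin_two] at *
  grind

/-- **2 memory cells are insufficient for the W-language.** For every deductron with
6 inputs, 2 memory cells and 2 outputs there is a valid W-image and a position `t`
at which the output differs from the required decoding. -/
theorem deductron_two_cells_cannot_decode_W :
    ∀ (W1 : Matrix (Fin (2 * 2)) (Fin 6) ℝ) (b1 : Fin (2 * 2) → ℝ)
      (W2 : Matrix (Fin 2) (Fin 2) ℝ) (b2 : Fin 2 → ℝ),
      ∃ (N : ℕ) (c : ℕ → Fin 3 → ℝ), ValidWImage N c ∧
        ∃ t, 1 ≤ t ∧ t ≤ N - 1 ∧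
          ((EmitsX c t ∧ (fun i => dedO 2 6 2 W1 b1 W2 b2 (slide c) t i) ≠ ![1, 0]) ∨
           (EmitsO c t ∧ (fun i => dedO 2 6 2 W1 b1 W2 b2 (slide c) t i) ≠ ![0, 1]) ∨
           (¬ EmitsX c t ∧ ¬ EmitsO c t ∧
             (fun i => dedO 2 6 2 W1 b1 W2 b2 (slide c) t i) ≠ ![0, 0])) := by
  intro W1 b1 W2 b2
  by_contra hne
  have H : DecodesW 2 W1 b1 W2 b2 := by
    intro N c hc t h1 h2
    refine ⟨fun hX => ?_, fun hO => ?_, fun hX hO => ?_⟩ <;> by_contra hbad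
    · exact hne ⟨N, c, hc, t, h1, h2, Or.inl ⟨hX, hbad⟩⟩
    · exact hne ⟨N, c, hc, t, h1, h2, Or.inr (Or.inl ⟨hO, hbad⟩)⟩
    · exact hne ⟨N, c, hc, t, h1, h2, Or.inr (Or.inr ⟨hX, hO, hbad⟩)⟩
  set zX := dedZ 2 6 W1 b1 (slide (imageOf pathX)) with hzX
  set zO := dedZ 2 6 W1 b1 (slide (imageOf pathO)) with hzO
  -- The output as a function of the memory content.
  let out : (Fin 2 → ℝ) → Fin 2 → ℝ := fun z i => hardS ((∑ j, W2 i j * z j) + b2 i)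
  have X3 : out (zX 3) = ![1, 0] :=
    (H 6 _ valid_pathX 3 (by norm_num) (by norm_num)).1 emitsX_pathX
  have X4 : out (zX 4) = ![0, 0] :=
    (H 6 _ valid_pathX 4 (by norm_num) (by norm_num)).2.2
      (not_emitsX_pathX 4 (by norm_num) (by norm_num)) (not_emitsO_pathX 4 (by norm_num))
  have X5 : out (zX 5) = ![0, 0] :=
    (H 6 _ valid_pathX 5 (by norm_num) (by norm_num)).2.2
      (not_emitsX_pathX 5 (by norm_num) (by norm_num)) (not_emitsO_pathX 5 (by norm_num))
  have O1 : out (zO 1) = ![0, 0] :=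
    (H 4 _ valid_pathO 1 (by norm_num) (by norm_num)).2.2
      (not_emitsX_pathO 1 (by norm_num)) (not_emitsO_pathO 1 (by norm_num) (by norm_num))
  have O2 : out (zO 2) = ![0, 0] :=
    (H 4 _ valid_pathO 2 (by norm_num) (by norm_num)).2.2
      (not_emitsX_pathO 2 (by norm_num)) (not_emitsO_pathO 2 (by norm_num) (by norm_num))
  have O3 : out (zO 3) = ![0, 1] :=
    (H 4 _ valid_pathO 3 (by norm_num) (by norm_num)).2.1 emitsO_pathO
  -- Contents with different outputs are different.
  have sep : ∀ (a b : Fin 2 → ℝ) (v w : Fin 2 → ℝ), out a = v → out b = w → v ≠ w → a ≠ b := by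
    rintro a b v w rfl rfl hvw rfl
    exact hvw rfl
  have X_ne_N : (![1, 0] : Fin 2 → ℝ) ≠ ![0, 0] := by simp
  have O_ne_N : (![0, 1] : Fin 2 → ℝ) ≠ ![0, 0] := by simp
  have X_ne_O : (![1, 0] : Fin 2 → ℝ) ≠ ![0, 1] := by simp
  exact no_two_bit_trace (zX 3) (zX 4) (zX 5) (zO 1) (zO 2) (zO 3)
    (dedZ_eq_zero_or_one _ _ _ _ _ _) (dedZ_eq_zero_or_one _ _ _ _ _ _)
    (dedZ_eq_zero_or_one _ _ _ _ _ _) (dedZ_eq_zero_or_one _ _ _ _ _ _)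
    (dedZ_eq_zero_or_one _ _ _ _ _ _) (dedZ_eq_zero_or_one _ _ _ _ _ _)
    (fun i => dedZ_congr 2 6 W1 b1 _ _ 3 1 i rfl)
    (fun i => dedZ_congr 2 6 W1 b1 _ _ 4 2 i rfl)
    (sep _ _ _ _ X3 X4 X_ne_N) (sep _ _ _ _ X3 X5 X_ne_N)
    (sep _ _ _ _ X3 O2 X_ne_N) (sep _ _ _ _ X3 O3 X_ne_O) (sep _ _ _ _ O3 X4 O_ne_N)
    (sep _ _ _ _ O3 X5 O_ne_N) (sep _ _ _ _ O3 O1 O_ne_N) (sep _ _ _ _ O3 O2 O_ne_N)
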